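/- Let X₁, Y₁, X₂, Y₂ be finite nonempty types, let D₁ be a probability mass function on X₁ × Y₁ and D₂ a probability mass function on X₂ × Y₂, each with everywhere positive marginals, and let 0 ≤ δ < 1. If D₁ is δ-hypercontractive and D₂ is δ-hypercontractive, then the product distribution D₁ ⊗ D₂ on (X₁ × X₂) × (Y₁ × Y₂), defined by (D₁ ⊗ D₂)((x₁,x₂),(y₁,y₂)) = D₁(x₁,y₁) · D₂(x₂,y₂), is δ-hypercontractive. In particular, δ(D₁ ⊗ D₂) ≥ min(δ(D₁), δ(D₂)). -/

import Mathlib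

open Finset

/-- Marginal distribution on `X` of a distribution on `X × Y`. -/
noncomputable def margX {X Y : Type*} [Fintype Y] (D : X × Y → ℝ) (x : X) : ℝ :=
  ∑ y, D (x, y)

/-- Marginal distribution on `Y` of a distribution on `X × Y`. -/
noncomputable def margY {X Y : Type*} [Fintype X] (D : X × Y → ℝ) (y : Y) : ℝ :=
  ∑ x, D (x, y)

/-- The conditional-expectation operator `T_D`: `(T_D f)(x) = E[f(y) | x]`. -/
noncomputable def condOp {X Y : Type*} [Fintype Y] (D : X × Y → ℝ) (f : Y → ℝ) (x : X) : ℝ :=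
  (∑ y, D (x, y) * f y) / margX D x

/-- The `L_p` norm of `f` with respect to the weight (probability mass) `w`. -/
noncomputable def wnorm {α : Type*} [Fintype α] (w : α → ℝ) (p : ℝ) (f : α → ℝ) : ℝ :=
  (∑ a, w a * |f a| ^ p) ^ (1 / p)

/-- `D` is `δ`-hypercontractive: `‖T_D f‖_{2 + δ/(1-δ)} ≤ ‖f‖_{2-δ}` for all `f`. -/
def Hypercontractive {X Y : Type*} [Fintype X] [Fintype Y] (D : X × Y → ℝ) (δ : ℝ) : Prop :=
  ∀ f : Y → ℝ,
    wnorm (margX D) (2 + δ / (1 - δ)) (condOp D f) ≤ wnorm (margY D) (2 - δ) f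

/-- The product of two distributions, as a distribution on `(X₁ × X₂) × (Y₁ × Y₂)`. -/
noncomputable def prodDist {X₁ Y₁ X₂ Y₂ : Type*}
    (D₁ : X₁ × Y₁ → ℝ) (D₂ : X₂ × Y₂ → ℝ) : (X₁ × X₂) × (Y₁ × Y₂) → ℝ :=
  fun p => D₁ (p.1.1, p.2.1) * D₂ (p.1.2, p.2.2)

/-!
Let `T₁`, `T₂` be the operators of `D₁`, `D₂`, both contractions from `L_p` to `L_q`. The operator
of `D₁ ⊗ D₂` is `T₁ T₂`, each factor acting in its own variable. Contractivity of `T₁`, with `x₂`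
frozen, bounds `‖T₁ T₂ f‖_q` by the `L_q` norm in `x₂` of `‖(T₂ f)(·, x₂)‖_p`. Since `T₂` averages
with nonnegative weights, Minkowski's inequality moves the `L_p` norm inside `T₂`, and it remains
to apply contractivity of `T₂` to `y₂ ↦ ‖f(·, y₂)‖_p`.
-/

section WeightedNorm

variable {α β ι : Type*} [Fintype α] [Fintype β] {w : α → ℝ} {p : ℝ}

theorem sum_mul_abs_rpow_nonneg (hw : ∀ a, 0 ≤ w a) (p : ℝ) (f : α → ℝ) :
    0 ≤ ∑ a, w a * |f a| ^ p :=
  sum_nonneg fun a _ ↦ mul_nonneg (hw a) (Real.rpow_nonneg (abs_nonneg _) p)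

theorem wnorm_nonneg (hw : ∀ a, 0 ≤ w a) (p : ℝ) (f : α → ℝ) : 0 ≤ wnorm w p f :=
  Real.rpow_nonneg (sum_mul_abs_rpow_nonneg hw p f) _

theorem wnorm_rpow (hw : ∀ a, 0 ≤ w a) (hp : p ≠ 0) (f : α → ℝ) :
    wnorm w p f ^ p = ∑ a, w a * |f a| ^ p := by
  rw [wnorm, one_div, Real.rpow_inv_rpow (sum_mul_abs_rpow_nonneg hw p f) hp]

theorem wnorm_zero (w : α → ℝ) (hp : p ≠ 0) : wnorm w p 0 = 0 := by
  simp [wnorm, hp]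

theorem wnorm_smul (hw : ∀ a, 0 ≤ w a) (hp : p ≠ 0) (c : ℝ) (f : α → ℝ) :
    wnorm w p (c • f) = |c| * wnorm w p f := by
  have hsum : ∑ a, w a * |(c • f) a| ^ p = |c| ^ p * ∑ a, w a * |f a| ^ p := by
    rw [mul_sum]
    refine sum_congr rfl fun a _ ↦ ?_
    rw [Pi.smul_apply, smul_eq_mul, abs_mul, Real.mul_rpow (abs_nonneg _) (abs_nonneg _)]
    ring
  rw [wnorm, hsum, Real.mul_rpow (Real.rpow_nonneg (abs_nonneg c) p)
    (sum_mul_abs_rpow_nonneg hw p f), one_div, Real.rpow_rpow_inv (abs_nonneg c) hp, wnorm, one_div]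

theorem wnorm_mono_abs (hw : ∀ a, 0 ≤ w a) (hp : 0 ≤ p) {f g : α → ℝ}
    (hfg : ∀ a, |f a| ≤ |g a|) : wnorm w p f ≤ wnorm w p g := by
  refine Real.rpow_le_rpow (sum_mul_abs_rpow_nonneg hw p f) ?_ (one_div_nonneg.2 hp)
  exact sum_le_sum fun a _ ↦
    mul_le_mul_of_nonneg_left (Real.rpow_le_rpow (abs_nonneg _) (hfg a) hp) (hw a)

theorem wnorm_add_le (hw : ∀ a, 0 ≤ w a) (hp : 1 ≤ p) (f g : α → ℝ) :
    wnorm w p (f + g) ≤ wnorm w p f + wnorm w p g := by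
  have wnorm_eq (h : α → ℝ) :
      wnorm w p h = (∑ a, |w a ^ p⁻¹ * h a| ^ p) ^ (1 / p) := by
    refine congrArg (· ^ (1 / p)) (sum_congr rfl fun a _ ↦ ?_)
    have hwp : 0 ≤ w a ^ p⁻¹ := Real.rpow_nonneg (hw a) _
    rw [abs_mul, abs_of_nonneg hwp, Real.mul_rpow hwp (abs_nonneg _),
      Real.rpow_inv_rpow (hw a) (by linarith)]
  simpa only [wnorm_eq, Pi.add_apply, mul_add] using
    Real.Lp_add_le univ (fun a ↦ w a ^ p⁻¹ * f a) (fun a ↦ w a ^ p⁻¹ * g a) hp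

theorem wnorm_sum_le (hw : ∀ a, 0 ≤ w a) (hp : 1 ≤ p) (s : Finset ι) (F : ι → α → ℝ) :
    wnorm w p (∑ i ∈ s, F i) ≤ ∑ i ∈ s, wnorm w p (F i) :=
  le_sum_of_subadditive (wnorm w p) (wnorm_zero w (by linarith)).le (wnorm_add_le hw hp) s F

theorem wnorm_prod_eq_wnorm_wnorm (hw : ∀ a, 0 ≤ w a) (v : β → ℝ) (hp : p ≠ 0) (f : α × β → ℝ) :
    wnorm (fun x ↦ w x.1 * v x.2) p f =
      wnorm v p (fun b ↦ wnorm w p (fun a ↦ f (a, b))) := by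
  rw [wnorm, wnorm, Fintype.sum_prod_type_right]
  refine congrArg (· ^ (1 / p)) (sum_congr rfl fun b _ ↦ ?_)
  rw [abs_of_nonneg (wnorm_nonneg hw p _), wnorm_rpow hw hp, mul_sum]
  exact sum_congr rfl fun a _ ↦ by ring

end WeightedNorm

section Marginal

variable {X Y : Type*} {D : X × Y → ℝ}

theorem margX_nonneg [Fintype Y] (hD : ∀ z, 0 ≤ D z) (x : X) : 0 ≤ margX D x :=
  sum_nonneg fun _ _ ↦ hD _

theorem margY_nonneg [Fintype X] (hD : ∀ z, 0 ≤ D z) (y : Y) : 0 ≤ margY D y :=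
  sum_nonneg fun _ _ ↦ hD _

theorem wnorm_condOp_le_condOp_wnorm [Fintype Y] {α : Type*} [Fintype α]
    (hD : ∀ z, 0 ≤ D z) {w : α → ℝ} (hw : ∀ a, 0 ≤ w a) {p : ℝ} (hp : 1 ≤ p)
    (F : Y → α → ℝ) (x : X) :
    wnorm w p (fun a ↦ condOp D (fun y ↦ F y a) x) ≤ condOp D (fun y ↦ wnorm w p (F y)) x := by
  have hc (y : Y) : 0 ≤ D (x, y) / margX D x := div_nonneg (hD _) (margX_nonneg hD x)
  calc wnorm w p (fun a ↦ condOp D (fun y ↦ F y a) x)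
      = wnorm w p (∑ y, (D (x, y) / margX D x) • F y) := by
        congr 1 with a
        simp only [condOp, sum_div, Finset.sum_apply, Pi.smul_apply, smul_eq_mul,
          div_mul_eq_mul_div]
    _ ≤ ∑ y, wnorm w p ((D (x, y) / margX D x) • F y) := wnorm_sum_le hw hp _ _
    _ = condOp D (fun y ↦ wnorm w p (F y)) x := by
        simp only [wnorm_smul hw (by linarith : p ≠ 0), abs_of_nonneg (hc _), condOp, sum_div,
          div_mul_eq_mul_div]

end Marginal

section Product

variable {X₁ Y₁ X₂ Y₂ : Type*}

theorem margX_prodDist [Fintype Y₁] [Fintype Y₂] (D₁ : X₁ × Y₁ → ℝ) (D₂ : X₂ × Y₂ → ℝ) :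
    margX (prodDist D₁ D₂) = fun x ↦ margX D₁ x.1 * margX D₂ x.2 := by
  ext x
  simp only [margX, prodDist, Fintype.sum_prod_type, sum_mul_sum]

theorem margY_prodDist [Fintype X₁] [Fintype X₂] (D₁ : X₁ × Y₁ → ℝ) (D₂ : X₂ × Y₂ → ℝ) :
    margY (prodDist D₁ D₂) = fun y ↦ margY D₁ y.1 * margY D₂ y.2 := by
  ext y
  simp only [margY, prodDist, Fintype.sum_prod_type, sum_mul_sum]

theorem condOp_prodDist [Fintype Y₁] [Fintype Y₂] (D₁ : X₁ × Y₁ → ℝ) (D₂ : X₂ × Y₂ → ℝ)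
    (f : Y₁ × Y₂ → ℝ) (x₁ : X₁) (x₂ : X₂) :
    condOp (prodDist D₁ D₂) f (x₁, x₂) =
      condOp D₁ (fun y₁ ↦ condOp D₂ (fun y₂ ↦ f (y₁, y₂)) x₂) x₁ := by
  simp only [condOp, margX_prodDist, prodDist, Fintype.sum_prod_type, sum_div, mul_sum]
  exact sum_congr rfl fun y₁ _ ↦ sum_congr rfl fun y₂ _ ↦ by ring

variable [Fintype X₁] [Fintype Y₁] [Fintype X₂] [Fintype Y₂]

theorem stmt7_general {D₁ : X₁ × Y₁ → ℝ} {D₂ : X₂ × Y₂ → ℝ}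
    (hD₁ : ∀ z, 0 ≤ D₁ z) (hD₂ : ∀ z, 0 ≤ D₂ z) {p q : ℝ} (hp : 1 ≤ p) (hq : 0 < q)
    (h₁ : ∀ f, wnorm (margX D₁) q (condOp D₁ f) ≤ wnorm (margY D₁) p f)
    (h₂ : ∀ f, wnorm (margX D₂) q (condOp D₂ f) ≤ wnorm (margY D₂) p f) (f : Y₁ × Y₂ → ℝ) :
    wnorm (margX (prodDist D₁ D₂)) q (condOp (prodDist D₁ D₂) f) ≤
      wnorm (margY (prodDist D₁ D₂)) p f := by
  have hX₁ := margX_nonneg hD₁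
  have hX₂ := margX_nonneg hD₂
  have hY₁ := margY_nonneg hD₁
  calc wnorm (margX (prodDist D₁ D₂)) q (condOp (prodDist D₁ D₂) f)
      = wnorm (margX D₂) q (fun x₂ ↦ wnorm (margX D₁) q
          (condOp D₁ (fun y₁ ↦ condOp D₂ (fun y₂ ↦ f (y₁, y₂)) x₂))) := by
        simp only [margX_prodDist, wnorm_prod_eq_wnorm_wnorm hX₁ _ hq.ne', condOp_prodDist]
    _ ≤ wnorm (margX D₂) q (fun x₂ ↦ wnorm (margY D₁) p
          (fun y₁ ↦ condOp D₂ (fun y₂ ↦ f (y₁, y₂)) x₂)) :=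
        wnorm_mono_abs hX₂ hq.le fun _ ↦ abs_le_abs_of_nonneg (wnorm_nonneg hX₁ q _) (h₁ _)
    _ ≤ wnorm (margX D₂) q (condOp D₂ (fun y₂ ↦ wnorm (margY D₁) p (fun y₁ ↦ f (y₁, y₂)))) :=
        wnorm_mono_abs hX₂ hq.le fun x₂ ↦ abs_le_abs_of_nonneg (wnorm_nonneg hY₁ p _)
          (wnorm_condOp_le_condOp_wnorm hD₂ hY₁ hp (fun y₂ y₁ ↦ f (y₁, y₂)) x₂)
    _ ≤ wnorm (margY D₂) p (fun y₂ ↦ wnorm (margY D₁) p (fun y₁ ↦ f (y₁, y₂))) := h₂ _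
    _ = wnorm (margY (prodDist D₁ D₂)) p f := by
        rw [margY_prodDist, wnorm_prod_eq_wnorm_wnorm hY₁ _ (by linarith)]

end Product

theorem stmt7 {X₁ Y₁ X₂ Y₂ : Type*}
    [Fintype X₁] [Fintype Y₁] [Fintype X₂] [Fintype Y₂]
    [Nonempty X₁] [Nonempty Y₁] [Nonempty X₂] [Nonempty Y₂]
    (D₁ : X₁ × Y₁ → ℝ) (D₂ : X₂ × Y₂ → ℝ)
    (hD₁0 : ∀ p, 0 ≤ D₁ p) (hD₁1 : ∑ p, D₁ p = 1)
    (hD₁X : ∀ x, 0 < margX D₁ x) (hD₁Y : ∀ y, 0 < margY D₁ y)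
    (hD₂0 : ∀ p, 0 ≤ D₂ p) (hD₂1 : ∑ p, D₂ p = 1)
    (hD₂X : ∀ x, 0 < margX D₂ x) (hD₂Y : ∀ y, 0 < margY D₂ y)
    (δ : ℝ) (hδ0 : 0 ≤ δ) (hδ1 : δ < 1)
    (h₁ : Hypercontractive D₁ δ) (h₂ : Hypercontractive D₂ δ) :
    Hypercontractive (prodDist D₁ D₂) δ :=
  stmt7_general hD₁0 hD₂0 (by linarith)
    (add_pos_of_pos_of_nonneg two_pos (div_nonneg hδ0 (sub_nonneg.2 hδ1.le))) h₁ h₂
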